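/- For any Boolean function g : {0,1}^n → {0,1}, the average sensitivity satisfies s̄_g ≥ H(p_g)/n, where p_g is the fraction of inputs at which g equals 1 and H is the binary entropy function. -/

import Mathlib

/-- Flip the i-th bit of a Boolean string. -/
def flipBit {n : ℕ} (x : Fin n → Bool) (i : Fin n) : Fin n → Bool :=
  Function.update x i (!(x i))

/-- Binary entropy function. -/
noncomputable def binEnt (p : ℝ) : ℝ :=
  p * Real.logb 2 (1 / p) + (1 - p) * Real.logb 2 (1 / (1 - p))

lemma xlogx_aux (a b : ℝ) (ha : 0 ≤ a) (hab : a ≤ b) :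
    a * Real.log a + b * Real.log b + 2 * a * Real.log 2 ≤ (a + b) * Real.log (a + b) := by
  rcases ha.eq_or_lt with rfl | ha
  · simp
  have hb : 0 < b := ha.trans_le hab
  have hs : 0 < a + b := by positivity
  have hc := Real.strictConcave_binEntropy.concaveOn.2 (show (0 : ℝ) ∈ Set.Icc 0 1 by simp)
    (show (2⁻¹ : ℝ) ∈ Set.Icc 0 1 by constructor <;> norm_num)
    (show 0 ≤ 1 - 2 * (a / (a + b)) by
      have : a / (a + b) ≤ 1 / 2 := by
        rw [div_le_div_iff₀ hs (by norm_num)]; linarith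
      linarith) (show 0 ≤ 2 * (a / (a + b)) by positivity) (by ring)
  have e1 : (1 : ℝ) - a / (a + b) = b / (a + b) := by field_simp; ring
  have e2 : 2 * (a / (a + b)) * 2⁻¹ = a / (a + b) := by ring
  simp only [smul_eq_mul, Real.binEntropy_zero, mul_zero, zero_add, Real.binEntropy_two_inv,
    e2] at hc
  rw [Real.binEntropy, e1, Real.log_inv, Real.log_inv, Real.log_div ha.ne' hs.ne',
    Real.log_div hb.ne' hs.ne'] at hc
  have := mul_le_mul_of_nonneg_left hc hs.le
  field_simp at this
  linarith

lemma xlogx_min (a b m : ℝ) (ha : 0 ≤ a) (hb : 0 ≤ b) (h1 : m ≤ a) (h2 : m ≤ b) :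
    a * Real.log a + b * Real.log b + 2 * m * Real.log 2 ≤ (a + b) * Real.log (a + b) := by
  have hl : 0 < Real.log 2 := Real.log_pos (by norm_num)
  rcases le_total a b with h | h
  · have := xlogx_aux a b ha h
    nlinarith
  · have := xlogx_aux b a hb h
    rw [add_comm b a] at this
    nlinarith

lemma sum_cube_succ {n : ℕ} (F : (Fin (n + 1) → Bool) → ℝ) :
    ∑ x, F x = ∑ y : Fin n → Bool, F (Fin.cons false y) +
      ∑ y : Fin n → Bool, F (Fin.cons true y) := by
  rw [← (Fin.consEquiv (fun _ : Fin (n + 1) => Bool)).sum_comp, Fintype.sum_prod_type]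
  simp [Fin.consEquiv, add_comm]

lemma flip_zero {n : ℕ} (b : Bool) (y : Fin n → Bool) :
    flipBit (Fin.cons b y : Fin (n + 1) → Bool) 0 = Fin.cons (!b) y := by
  simp [flipBit, Fin.update_cons_zero]

lemma flip_succ {n : ℕ} (b : Bool) (y : Fin n → Bool) (i : Fin n) :
    flipBit (Fin.cons b y : Fin (n + 1) → Bool) i.succ = Fin.cons b (flipBit y i) := by
  simp [flipBit, Fin.cons_update]

lemma internal_edges {n : ℕ} (u : (Fin n → Bool) → ℝ) (hu : ∀ x, u x = 0 ∨ u x = 1) :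
    (∑ x, ∑ i, u x * u (flipBit x i)) * Real.log 2 ≤ (∑ x, u x) * Real.log (∑ x, u x) := by
  induction n with
  | zero =>
    have h0 := Fintype.sum_unique u
    obtain ⟨z, h0⟩ : ∃ z, ∑ x, u x = u z := ⟨_, h0⟩
    rw [h0]
    rcases hu z with h | h <;> rw [h] <;> simp
  | succ n ih =>
    have i0 := ih (fun y => u (Fin.cons false y)) (fun y => hu _)
    have i1 := ih (fun y => u (Fin.cons true y)) (fun y => hu _)
    have n0 : ∀ x, 0 ≤ u x := fun x => by rcases hu x with h | h <;> simp [h]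
    have n1 : ∀ x, u x ≤ 1 := fun x => by rcases hu x with h | h <;> simp [h]
    have key := xlogx_min (∑ y : Fin n → Bool, u (Fin.cons false y))
      (∑ y : Fin n → Bool, u (Fin.cons true y))
      (∑ y : Fin n → Bool, u (Fin.cons false y) * u (Fin.cons true y))
      (Finset.sum_nonneg fun _ _ => n0 _) (Finset.sum_nonneg fun _ _ => n0 _)
      (Finset.sum_le_sum fun y _ => mul_le_of_le_one_right (n0 _) (n1 _))
      (Finset.sum_le_sum fun y _ => mul_le_of_le_one_left (n0 _) (n1 _))
    have comm : ∑ y : Fin n → Bool, u (Fin.cons true y) * u (Fin.cons false y) =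
        ∑ y : Fin n → Bool, u (Fin.cons false y) * u (Fin.cons true y) :=
      Finset.sum_congr rfl fun _ _ => mul_comm _ _
    rw [sum_cube_succ, sum_cube_succ u]
    simp only [Fin.sum_univ_succ, flip_zero, flip_succ, Finset.sum_add_distrib, Bool.not_false,
      Bool.not_true]
    rw [comm]
    linarith

/-- For any Boolean function `g : {0,1}^n → {0,1}`, the average sensitivity
satisfies `s̄_g ≥ H(p_g)/n`. -/
theorem avg_sensitivity_ge_entropy {n : ℕ} (hn : 0 < n)
    (g : (Fin n → Bool) → Bool) :
    (((Finset.univ : Finset ((Fin n → Bool) × Fin n)).filter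
        (fun p => g p.1 ≠ g (flipBit p.1 p.2))).card : ℝ) / (2 ^ n * n)
      ≥ binEnt (((Finset.univ.filter (fun x => g x = true)).card : ℝ) / 2 ^ n) / n := by
  have hn' : (0 : ℝ) < n := by exact_mod_cast hn
  have hl : 0 < Real.log 2 := Real.log_pos (by norm_num)
  let u : (Fin n → Bool) → ℝ := fun x => if g x = true then 1 else 0
  have hu : ∀ x, u x = 0 ∨ u x = 1 := fun x => by by_cases h : g x = true <;> simp [u, h]
  have hA : ((Finset.univ.filter (fun x => g x = true)).card : ℝ) = ∑ x, u x := by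
    simp [u]
  have hC : (((Finset.univ : Finset ((Fin n → Bool) × Fin n)).filter
        (fun p => g p.1 ≠ g (flipBit p.1 p.2))).card : ℝ) = 2 ^ n * n
        - ∑ x, ∑ i, u x * u (flipBit x i)
        - ∑ x, ∑ i, (1 - u x) * (1 - u (flipBit x i)) := by
    have h1 : (2 : ℝ) ^ n * n = ∑ x : Fin n → Bool, ∑ i : Fin n, (1 : ℝ) := by simp
    rw [h1, Finset.card_filter, Fintype.sum_prod_type]
    push_cast
    simp only [← Finset.sum_sub_distrib]
    refine Finset.sum_congr rfl fun x _ => Finset.sum_congr rfl fun i _ => ?_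
    cases h : g x <;> cases h' : g (flipBit x i) <;> simp [u, h, h']
  have k1 := internal_edges u hu
  have k2 := internal_edges (fun x => 1 - u x)
    (fun x => by rcases hu x with h | h <;> simp [h])
  have hB : ∑ x, (1 - u x) = 2 ^ n - ∑ x, u x := by
    simp [Finset.sum_sub_distrib]
  rw [hB] at k2
  rw [hC, hA, ge_iff_le, ← div_div]
  refine div_le_div_of_nonneg_right ?_ hn'.le
  generalize (∑ x, ∑ i, u x * u (flipBit x i)) = E1 at *
  generalize (∑ x, ∑ i, (1 - u x) * (1 - u (flipBit x i))) = E2 at *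
  generalize (∑ x, u x) = a at *
  have hN : (0 : ℝ) < 2 ^ n := by positivity
  have hlN : Real.log ((2 : ℝ) ^ n) = n * Real.log 2 := by simp
  generalize (2 : ℝ) ^ n = N at *
  have aux : ∀ c : ℝ, N * (c / N * Real.log (1 / (c / N))) = c * Real.log N - c * Real.log c := by
    intro c
    by_cases hc : c = 0
    · simp [hc]
    · rw [one_div, Real.log_inv, Real.log_div hc hN.ne']
      field_simp
      ring
  have e : 1 - a / N = (N - a) / N := by field_simp
  rw [le_div_iff₀ hN, binEnt, e, Real.logb, Real.logb]
  have a1 := aux a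
  have a2 := aux (N - a)
  refine le_of_mul_le_mul_right ?_ hl
  have : (a / N * (Real.log (1 / (a / N)) / Real.log 2) +
      (N - a) / N * (Real.log (1 / ((N - a) / N)) / Real.log 2)) * N * Real.log 2 =
      N * (a / N * Real.log (1 / (a / N))) +
      N * ((N - a) / N * Real.log (1 / ((N - a) / N))) := by
    generalize Real.log (1 / (a / N)) = X
    generalize Real.log (1 / ((N - a) / N)) = Y
    field_simp
  rw [this, a1, a2, hlN]
  linarith
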